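/- arXiv:2305.01301 — 2 statements merged into one kernel-verified Lean document; each statement's English description precedes it below -/
import Mathlib

section
/- Let n ≥ 1 and let S be any F₂-linear subspace of ((F₂)²)ⁿ, with symplectic dual S^⊥ₛ. Then for all real numbers x and z: Σ_{v ∈ S^⊥ₛ} x^{n−wt(v)} · z^{wt(v)} = (1/|S|) · Σ_{v ∈ S} (x + 3z)^{n−wt(v)} · (x − z)^{wt(v)}. -/
/-- Symplectic representation of a Pauli error pattern on `n` qubits. -/
abbrev PauliVec (n : ℕ) : Type := Fin n → ZMod 2 × ZMod 2

/-- The weight of a Pauli vector: the number of non-identity components. -/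
def wt {n : ℕ} (v : PauliVec n) : ℕ := (Finset.univ.filter fun i => v i ≠ 0).card

/-- The symplectic inner product over `F₂`. -/
def symp {n : ℕ} (u v : PauliVec n) : ZMod 2 :=
  ∑ i, ((u i).1 * (v i).2 + (u i).2 * (v i).1)

/-- The symplectic dual of a subspace `S`. -/
def sympDual {n : ℕ} (S : Submodule (ZMod 2) (PauliVec n)) : Set (PauliVec n) :=
  {v | ∀ s ∈ S, symp v s = 0}

/-- The nontrivial sign character of `F₂`. -/
def sgn2 (a : ZMod 2) : ℝ := if a = 0 then 1 else -1

theorem sgn2_zero : sgn2 0 = 1 := by simp [sgn2]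

theorem sgn2_add (a b : ZMod 2) : sgn2 (a + b) = sgn2 a * sgn2 b := by
  have h : (1 : ZMod 2) + 1 = 0 := by decide
  have hd : ∀ a : ZMod 2, a = 0 ∨ a = 1 := by decide
  rcases hd a with rfl | rfl <;> rcases hd b with rfl | rfl <;> simp [sgn2, h]

theorem sgn2_sum {ι : Type*} (s : Finset ι) (f : ι → ZMod 2) :
    sgn2 (∑ i ∈ s, f i) = ∏ i ∈ s, sgn2 (f i) := by
  classical
  induction s using Finset.induction_on with
  | empty => simp [sgn2_zero]
  | insert a s ha ih => rw [Finset.sum_insert ha, Finset.prod_insert ha, sgn2_add, ih]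

theorem symp_add_right {n : ℕ} (v s t : PauliVec n) : symp v (s + t) = symp v s + symp v t := by
  unfold symp
  rw [← Finset.sum_add_distrib]
  refine Finset.sum_congr rfl fun i _ => ?_
  simp only [Pi.add_apply, Prod.fst_add, Prod.snd_add]
  ring

theorem prod_wt {n : ℕ} (v : PauliVec n) (x z : ℝ) :
    ∏ i, (if v i = 0 then x else z) = x ^ (n - wt v) * z ^ (wt v) := by
  rw [Finset.prod_ite, Finset.prod_const, Finset.prod_const]
  have h := Finset.card_filter_add_card_filter_not (s := (Finset.univ : Finset (Fin n)))
    (fun i => v i = 0)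
  rw [Finset.card_univ, Fintype.card_fin] at h
  have h2 : n - wt v = (Finset.univ.filter fun i => v i = 0).card := by
    unfold wt
    simp only [ne_eq]
    omega
  rw [h2]
  rfl

theorem local_sum (u : ZMod 2 × ZMod 2) (x z : ℝ) :
    ∑ a : ZMod 2 × ZMod 2, sgn2 (a.1 * u.2 + a.2 * u.1) * (if a = 0 then x else z)
      = if u = 0 then x + 3 * z else x - z := by
  have huniv : (Finset.univ : Finset (ZMod 2 × ZMod 2)) = {(0, 0), (0, 1), (1, 0), (1, 1)} := by
    decide
  have h : (1 : ZMod 2) + 1 = 0 := by decide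
  rw [huniv]
  obtain ⟨p, q⟩ := u
  have hd : ∀ a : ZMod 2, a = 0 ∨ a = 1 := by decide
  rcases hd p with rfl | rfl <;> rcases hd q with rfl | rfl <;> simp [sgn2, h] <;> ring

theorem pauli_fourier {n : ℕ} (u : PauliVec n) (x z : ℝ) :
    ∑ v : PauliVec n, sgn2 (symp v u) * (x ^ (n - wt v) * z ^ (wt v))
      = (x + 3 * z) ^ (n - wt u) * (x - z) ^ (wt u) := by
  rw [← prod_wt u]
  simp_rw [← local_sum]
  rw [Finset.prod_univ_sum, Fintype.piFinset_univ]
  refine Finset.sum_congr rfl fun v _ => ?_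
  rw [← prod_wt v, symp, sgn2_sum, Finset.prod_mul_distrib]

open scoped Classical in
theorem char_sum {n : ℕ} (S : Submodule (ZMod 2) (PauliVec n)) (v : PauliVec n) :
    ∑ s : S, sgn2 (symp v s) = if v ∈ sympDual S then (Nat.card S : ℝ) else 0 := by
  split_ifs with hv
  · rw [Finset.sum_congr rfl (fun s _ => by rw [hv s.1 s.2, sgn2_zero])]
    simp [Nat.card_eq_fintype_card]
  · simp only [sympDual, Set.mem_ofPred_eq, not_forall] at hv
    obtain ⟨t, ht, hne⟩ := hv
    have h := Equiv.sum_comp (Equiv.addRight (⟨t, ht⟩ : S)) (fun s : S => sgn2 (symp v s))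
    have h3 : sgn2 (symp v t) = -1 := by simp [sgn2, hne]
    simp only [Equiv.coe_addRight, Submodule.coe_add, symp_add_right, sgn2_add, h3] at h
    rw [← Finset.sum_mul] at h
    linarith

open scoped Classical in
/-- Quantum MacWilliams identity: the weight enumerator of the symplectic dual `S^⊥ₛ`
is obtained from the weight enumerator of `S` by the MacWilliams transform. -/
theorem stmt_1 (n : ℕ) (hn : 1 ≤ n) (S : Submodule (ZMod 2) (PauliVec n)) (x z : ℝ) :
    ∑ v ∈ (sympDual S).toFinset, x ^ (n - wt v) * z ^ (wt v)
      = (1 / (Nat.card S : ℝ)) *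
          ∑ v ∈ (S : Set (PauliVec n)).toFinset,
            (x + 3 * z) ^ (n - wt v) * (x - z) ^ (wt v) := by
  have hc : (Nat.card S : ℝ) ≠ 0 := by
    exact_mod_cast Nat.card_pos.ne'
  have h1 : ∑ v ∈ (S : Set (PauliVec n)).toFinset,
      (x + 3 * z) ^ (n - wt v) * (x - z) ^ (wt v)
      = ∑ s : S, (x + 3 * z) ^ (n - wt s.1) * (x - z) ^ (wt s.1) :=
    Finset.sum_subtype _ (by simp) _
  rw [h1]
  simp_rw [← pauli_fourier]
  rw [Finset.sum_comm]
  simp_rw [← Finset.sum_mul, char_sum, ite_mul, zero_mul]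
  rw [← Finset.sum_filter, ← Finset.mul_sum, ← mul_assoc, one_div, inv_mul_cancel₀ hc, one_mul]
  refine Finset.sum_congr ?_ fun _ _ => rfl
  ext v
  simp
end

section
/- Let S ⊆ ((F₂)²)¹³ be the F₂-span of the twelve symplectic vectors representing the [[13,1,3]] surface code generators: G₁ = X₁X₂X₄, G₂ = X₂X₃X₅, G₃ = Z₁Z₄Z₆, G₄ = Z₂Z₄Z₅Z₇, G₅ = Z₃Z₅Z₈, G₆ = X₄X₆X₇X₉, G₇ = X₅X₇X₈X₁₀, G₈ = Z₆Z₉Z₁₁, G₉ = Z₇Z₉Z₁₀Z₁₂, G₁₀ = Z₈Z₁₀Z₁₃, G₁₁ = X₉X₁₁X₁₂, G₁₂ = X₁₀X₁₂X₁₃ (Xᵢ denotes (1,0) in position i; Zᵢ denotes (0,1) in position i). Then for L_w = #{v ∈ S^⊥ₛ \ S : wt(v) = w}: L₃ = 6, L₄ = 24, L₅ = 75, L₆ = 240, L₇ = 648, L₈ = 1440, L₉ = 2538, L₁₀ = 3216, L₁₁ = 2634, L₁₂ = 1224, L₁₃ = 243, and L_w = 0 for all other w. -/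
/-- The vector with `X` (i.e. `(1,0)`) on the support `s` and identity elsewhere. -/
def xvec (n : ℕ) (s : Finset (Fin n)) : PauliVec n := fun i => if i ∈ s then (1, 0) else 0

/-- The vector with `Z` (i.e. `(0,1)`) on the support `s` and identity elsewhere. -/
def zvec (n : ℕ) (s : Finset (Fin n)) : PauliVec n := fun i => if i ∈ s then (0, 1) else 0

/-- The stabilizer subspace of the `[[13,1,3]]` surface code, spanned by
`X₁X₂X₄, X₂X₃X₅, Z₁Z₄Z₆, Z₂Z₄Z₅Z₇, Z₃Z₅Z₈, X₄X₆X₇X₉, X₅X₇X₈X₁₀, Z₆Z₉Z₁₁,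
Z₇Z₉Z₁₀Z₁₂, Z₈Z₁₀Z₁₃, X₉X₁₁X₁₂, X₁₀X₁₂X₁₃`. -/
def Surf13 : Submodule (ZMod 2) (PauliVec 13) :=
  Submodule.span (ZMod 2)
    {xvec 13 {0, 1, 3}, xvec 13 {1, 2, 4},
     zvec 13 {0, 3, 5}, zvec 13 {1, 3, 4, 6}, zvec 13 {2, 4, 7},
     xvec 13 {3, 5, 6, 8}, xvec 13 {4, 6, 7, 9},
     zvec 13 {5, 8, 10}, zvec 13 {6, 8, 9, 11}, zvec 13 {7, 9, 12},
     xvec 13 {8, 10, 11}, xvec 13 {9, 11, 12}}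


set_option linter.unusedSimpArgs false

open Submodule

/-- All elements `v + (sum of a sublist of gs)`. -/
def genV {n : ℕ} : List (PauliVec n) → PauliVec n → List (PauliVec n)
  | [], v => [v]
  | g :: gs, v => genV gs v ++ genV gs (v + g)

theorem pv_add_self {n : ℕ} (g : PauliVec n) : g + g = 0 := by
  funext i
  exact Prod.ext (CharTwo.add_self_eq_zero _) (CharTwo.add_self_eq_zero _)

theorem mem_genV {n : ℕ} (gs : List (PauliVec n)) : ∀ (v u : PauliVec n),
    u ∈ genV gs v ↔ u + v ∈ span (ZMod 2) {x | x ∈ gs} := by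
  induction gs with
  | nil =>
    intro v u
    simp only [genV, List.mem_singleton, List.not_mem_nil, Set.ofPred_false, span_empty, mem_bot]
    constructor
    · rintro rfl; exact pv_add_self u
    · intro h
      have := congrArg (· + v) h
      simpa [add_assoc, pv_add_self] using this
  | cons g gs ih =>
    intro v u
    have hs : {x | x ∈ g :: gs} = insert g {x | x ∈ gs} := by ext; simp
    simp only [genV, List.mem_append, ih, hs, mem_span_insert]
    constructor
    · rintro (h | h)
      · exact ⟨0, _, h, by simp⟩
      · refine ⟨1, _, h, ?_⟩
        have := pv_add_self g
        calc u + v = u + v + (g + g) := by rw [this, add_zero]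
          _ = _ := by rw [one_smul]; abel
    · rintro ⟨a, z, hz, h⟩
      have hc : ∀ a : ZMod 2, a = 0 ∨ a = 1 := by decide
      rcases hc a with rfl | rfl
      · left; rw [h]; simpa using hz
      · right
        rw [← add_assoc, h, one_smul, add_right_comm, pv_add_self, zero_add]; exact hz

theorem genV_phi {n : ℕ} (φ : PauliVec n →+ ZMod 2) (gs : List (PauliVec n))
    (h : ∀ g ∈ gs, φ g = 0) : ∀ v, ∀ u ∈ genV gs v, φ u = φ v := by
  induction gs with
  | nil => intro v u hu; simp [genV] at hu; rw [hu]
  | cons g gs ih =>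
    intro v u hu
    have h' : ∀ g ∈ gs, φ g = 0 := fun x hx => h x (List.mem_cons_of_mem _ hx)
    rcases List.mem_append.1 hu with hu | hu
    · exact ih h' _ _ hu
    · rw [ih h' _ _ hu, map_add, h g List.mem_cons_self, add_zero]

theorem genV_nodup_nil {n : ℕ} (v : PauliVec n) : (genV [] v).Nodup := by simp [genV]

theorem genV_nodup_cons {n : ℕ} (φ : PauliVec n →+ ZMod 2) (g : PauliVec n)
    (gs : List (PauliVec n)) (hg : φ g = 1) (h : ∀ g ∈ gs, φ g = 0)
    (hn : ∀ v, (genV gs v).Nodup) : ∀ v, (genV (g :: gs) v).Nodup := by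
  intro v
  refine List.nodup_append.2 ⟨hn _, hn _, ?_⟩
  rintro a ha b hb rfl
  have h1 := genV_phi φ gs h _ _ ha
  have h2 := genV_phi φ gs h _ _ hb
  rw [h1, map_add, hg] at h2
  simp at h2

/-- Coordinate functionals. -/
def phX (i : Fin 13) : PauliVec 13 →+ ZMod 2 where
  toFun v := (v i).1
  map_zero' := rfl
  map_add' _ _ := rfl

def phZ (i : Fin 13) : PauliVec 13 →+ ZMod 2 where
  toFun v := (v i).2
  map_zero' := rfl
  map_add' _ _ := rfl

def sympHom {n : ℕ} (s : PauliVec n) : PauliVec n →+ ZMod 2 where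
  toFun v := symp v s
  map_zero' := by simp [symp]
  map_add' u v := by
    simp only [symp, ← Finset.sum_add_distrib, Pi.add_apply, Prod.fst_add, Prod.snd_add]
    exact Finset.sum_congr rfl fun i _ => by ring

theorem symp_comm {n : ℕ} (u v : PauliVec n) : symp u v = symp v u := by
  simp only [symp]
  exact Finset.sum_congr rfl fun i _ => by ring

/-- The generators. -/
def gensV : List (PauliVec 13) :=
  [xvec 13 {0, 1, 3}, xvec 13 {1, 2, 4},
     zvec 13 {0, 3, 5}, zvec 13 {1, 3, 4, 6}, zvec 13 {2, 4, 7},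
     xvec 13 {3, 5, 6, 8}, xvec 13 {4, 6, 7, 9},
     zvec 13 {5, 8, 10}, zvec 13 {6, 8, 9, 11}, zvec 13 {7, 9, 12},
     xvec 13 {8, 10, 11}, xvec 13 {9, 11, 12}]

/-- Logical operators. -/
def lX : PauliVec 13 := xvec 13 {2, 7, 12}
def lZ : PauliVec 13 := zvec 13 {10, 11, 12}

theorem surf_eq : Surf13 = span (ZMod 2) {x | x ∈ gensV} := by
  unfold Surf13 gensV
  congr 1
  ext x
  simp only [Set.mem_insert_iff, Set.mem_singleton_iff, List.mem_cons, List.not_mem_nil,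
    or_false, Set.mem_ofPred_eq]

theorem gensV_nodup : ∀ v, (genV gensV v).Nodup := by
  unfold gensV
  refine genV_nodup_cons (phX 0) _ _ (by simp [phX, phZ, xvec, zvec]) (by simp [phX, phZ, xvec, zvec]) ?_
  refine genV_nodup_cons (phX 1) _ _ (by simp [phX, phZ, xvec, zvec]) (by simp [phX, phZ, xvec, zvec]) ?_
  refine genV_nodup_cons (phZ 0) _ _ (by simp [phX, phZ, xvec, zvec]) (by simp [phX, phZ, xvec, zvec]) ?_
  refine genV_nodup_cons (phZ 1) _ _ (by simp [phX, phZ, xvec, zvec]) (by simp [phX, phZ, xvec, zvec]) ?_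
  refine genV_nodup_cons (phZ 2) _ _ (by simp [phX, phZ, xvec, zvec]) (by simp [phX, phZ, xvec, zvec]) ?_
  refine genV_nodup_cons (phX 3) _ _ (by simp [phX, phZ, xvec, zvec]) (by simp [phX, phZ, xvec, zvec]) ?_
  refine genV_nodup_cons (phX 4) _ _ (by simp [phX, phZ, xvec, zvec]) (by simp [phX, phZ, xvec, zvec]) ?_
  refine genV_nodup_cons (phZ 5) _ _ (by simp [phX, phZ, xvec, zvec]) (by simp [phX, phZ, xvec, zvec]) ?_
  refine genV_nodup_cons (phZ 6) _ _ (by simp [phX, phZ, xvec, zvec]) (by simp [phX, phZ, xvec, zvec]) ?_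
  refine genV_nodup_cons (phZ 7) _ _ (by simp [phX, phZ, xvec, zvec]) (by simp [phX, phZ, xvec, zvec]) ?_
  refine genV_nodup_cons (phX 8) _ _ (by simp [phX, phZ, xvec, zvec]) (by simp [phX, phZ, xvec, zvec]) ?_
  refine genV_nodup_cons (phX 9) _ _ (by simp [phX, phZ, xvec, zvec]) (by simp [phX, phZ, xvec, zvec]) ?_
  exact genV_nodup_nil

theorem symp_z {n : ℕ} (v : PauliVec n) (s : Finset (Fin n)) :
    symp v (zvec n s) = ∑ i ∈ s, (v i).1 := by
  have hc : ∑ i ∈ s, (v i).1 = ∑ i, if i ∈ s then (v i).1 else 0 := by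
    rw [← Finset.sum_filter, Finset.filter_univ_mem]
  rw [hc]
  unfold symp zvec
  exact Finset.sum_congr rfl fun i _ => by split_ifs <;> simp

theorem symp_x {n : ℕ} (v : PauliVec n) (s : Finset (Fin n)) :
    symp v (xvec n s) = ∑ i ∈ s, (v i).2 := by
  have hc : ∑ i ∈ s, (v i).2 = ∑ i, if i ∈ s then (v i).2 else 0 := by
    rw [← Finset.sum_filter, Finset.filter_univ_mem]
  rw [hc]
  unfold symp xvec
  exact Finset.sum_congr rfl fun i _ => by split_ifs <;> simp

theorem sympHom_apply {n : ℕ} (s v : PauliVec n) : sympHom s v = symp v s := rfl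

theorem gens_symp_lX : ∀ g ∈ gensV, sympHom lX g = 0 := by
  simp [lX, gensV, sympHom_apply, symp_z, symp_x, xvec, zvec, CharTwo.add_self_eq_zero]
theorem gens_symp_lZ : ∀ g ∈ gensV, sympHom lZ g = 0 := by
  simp [lZ, gensV, sympHom_apply, symp_z, symp_x, xvec, zvec, CharTwo.add_self_eq_zero]

theorem gens_symp : ∀ g ∈ gensV, ∀ h ∈ gensV, sympHom g h = 0 := by
  intro g hg
  simp only [gensV, List.mem_cons, List.not_mem_nil, or_false] at hg
  rcases hg with rfl | rfl | rfl | rfl | rfl | rfl | rfl | rfl | rfl | rfl | rfl | rfl <;>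
    simp [gensV, sympHom_apply, symp_z, symp_x, xvec, zvec, CharTwo.add_self_eq_zero]

theorem lXX : sympHom lX lX = 0 := by simp [lX, gensV, sympHom_apply, symp_z, symp_x, xvec, zvec, CharTwo.add_self_eq_zero]
theorem lZZ : sympHom lZ lZ = 0 := by simp [lZ, gensV, sympHom_apply, symp_z, symp_x, xvec, zvec, CharTwo.add_self_eq_zero]
theorem lXZ : sympHom lX lZ = 1 := by simp [lX, lZ, gensV, sympHom_apply, symp_z, symp_x, xvec, zvec, CharTwo.add_self_eq_zero]
theorem lZX : sympHom lZ lX = 1 := by simp [lX, lZ, gensV, sympHom_apply, symp_z, symp_x, xvec, zvec, CharTwo.add_self_eq_zero]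
theorem gens_lX : ∀ g ∈ gensV, sympHom g lX = 0 := fun g hg =>
  (symp_comm _ _).trans (gens_symp_lX g hg)
theorem gens_lZ : ∀ g ∈ gensV, sympHom g lZ = 0 := fun g hg =>
  (symp_comm _ _).trans (gens_symp_lZ g hg)
theorem gens_lY : ∀ g ∈ gensV, sympHom g (lX + lZ) = 0 := fun g hg => by
  rw [map_add, gens_lX g hg, gens_lZ g hg, add_zero]

/-- A vector is orthogonal to the span iff it is orthogonal to the generators. -/
theorem mem_dual_iff (v : PauliVec 13) :
    v ∈ sympDual Surf13 ↔ ∀ g ∈ gensV, symp v g = 0 := by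
  rw [surf_eq]
  constructor
  · intro h g hg
    exact h g (subset_span hg)
  · intro h s hs
    induction hs using span_induction with
    | mem x hx => exact h x hx
    | zero => rw [symp_comm]; exact (sympHom v).map_zero
    | add x y _ _ hx hy =>
      rw [symp_comm] at hx hy ⊢
      have := (sympHom v).map_add x y
      simp only [sympHom, AddMonoidHom.coe_mk, ZeroHom.coe_mk] at this
      rw [this, hx, hy, add_zero]
    | smul a x _ hx =>
      have ha : a = 0 ∨ a = 1 := by revert a; decide
      rcases ha with rfl | rfl
      · rw [zero_smul, symp_comm]; exact (sympHom v).map_zero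
      · rwa [one_smul]

/-- All undetectable errors. -/
def allV : List (PauliVec 13) :=
  genV gensV lX ++ (genV gensV lZ ++ genV gensV (lX + lZ))

theorem allV_nodup : allV.Nodup := by
  have a1 := lXX
  have a2 := lXZ
  have a3 : sympHom lX (lX + lZ) = 1 := by rw [map_add, lXX, lXZ, zero_add]
  have b2 := lZZ
  have b3 : sympHom lZ (lX + lZ) = 1 := by rw [map_add, lZX, lZZ, add_zero]
  refine List.nodup_append.2 ⟨gensV_nodup _, List.nodup_append.2
    ⟨gensV_nodup _, gensV_nodup _, ?_⟩, ?_⟩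
  · rintro a ha b hb rfl
    have h1 := genV_phi _ gensV gens_symp_lZ _ _ ha
    have h2 := genV_phi _ gensV gens_symp_lZ _ _ hb
    rw [h1, b2, b3] at h2
    exact absurd h2 (by decide)
  · rintro a ha b hb rfl
    have h1 := genV_phi _ gensV gens_symp_lX _ _ ha
    rcases List.mem_append.1 hb with hb | hb
    · have h2 := genV_phi _ gensV gens_symp_lX _ _ hb
      rw [h1, a1, a2] at h2
      exact absurd h2 (by decide)
    · have h2 := genV_phi _ gensV gens_symp_lX _ _ hb
      rw [h1, a1, a3] at h2
      exact absurd h2 (by decide)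

theorem decomp (v : PauliVec 13) (h : ∀ g ∈ gensV, symp v g = 0) :
    ∃ a b : ZMod 2, v + (a • lX + b • lZ) ∈ Surf13 := by
  have hx : ∀ s, symp v (zvec 13 s) = ∑ i, if i ∈ s then (v i).1 else 0 := by
    intro s; unfold symp zvec
    exact Finset.sum_congr rfl fun i _ => by split_ifs <;> simp
  have hz : ∀ s, symp v (xvec 13 s) = ∑ i, if i ∈ s then (v i).2 else 0 := by
    intro s; unfold symp xvec
    exact Finset.sum_congr rfl fun i _ => by split_ifs <;> simp
  simp only [gensV, List.forall_mem_cons, hx, hz] at h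
  obtain ⟨z1, z2, x1, x2, x3, z3, z4, x4, x5, x6, z5, z6, -⟩ := h
  have hmem : ∀ c : Fin 12 → ZMod 2, ∑ i, c i • gensV.get i ∈ Surf13 := by
    intro c
    rw [surf_eq]
    exact sum_mem fun i _ => smul_mem _ _ (subset_span (List.get_mem _ _))
  simp only [Fin.sum_univ_succ, Finset.mem_insert, Finset.mem_singleton] at z1 z2 z3 z4 z5 z6 x1 x2 x3 x4 x5 x6
  simp [Fin.ext_iff] at z1 z2 z3 z4 z5 z6 x1 x2 x3 x4 x5 x6
  refine ⟨(v 0).1 + (v 1).1 + (v 2).1, (v 0).2 + (v 5).2 + (v 10).2, ?_⟩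
  have := hmem ![(v 0).1, (v 0).1 + (v 1).1, (v 0).2, (v 1).2, (v 2).2, (v 0).1 + (v 3).1,
    (v 0).1 + (v 1).1 + (v 4).1, (v 0).2 + (v 5).2, (v 1).2 + (v 6).2, (v 2).2 + (v 7).2,
    (v 0).1 + (v 3).1 + (v 8).1, (v 0).1 + (v 1).1 + (v 4).1 + (v 9).1]
  convert this using 1
  funext i
  simp only [gensV, Fin.sum_univ_succ, Fin.sum_univ_zero, Pi.add_apply, Pi.smul_apply, lX, lZ,
    List.get_eq_getElem]
  fin_cases i <;> refine Prod.ext ?_ ?_ <;> simp [xvec, zvec]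
  all_goals grind

theorem undet_iff (v : PauliVec 13) :
    (v ∈ sympDual Surf13 ∧ v ∉ Surf13) ↔ v ∈ allV := by
  have a1 := lXX
  have a2 := lXZ
  have a3 : sympHom lX (lX + lZ) = 1 := by rw [map_add, lXX, lXZ, zero_add]
  have b1 := lZX
  have hS : ∀ u, u ∈ Surf13 ↔ u ∈ genV gensV 0 := by
    intro u; rw [mem_genV, add_zero, surf_eq]
  constructor
  · rintro ⟨h, h'⟩
    obtain ⟨a, b, hab⟩ := decomp v ((mem_dual_iff v).1 h)
    have hc : ∀ a : ZMod 2, a = 0 ∨ a = 1 := by decide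
    simp only [allV, List.mem_append, mem_genV, ← surf_eq]
    rcases hc a with rfl | rfl <;> rcases hc b with rfl | rfl
    · exact absurd (by simpa using hab) h'
    · right; left; simpa using hab
    · left; simpa using hab
    · right; right; simpa using hab
  · intro h
    have hl : ∀ l : PauliVec 13, (∀ g ∈ gensV, sympHom g l = 0) → v ∈ genV gensV l →
        v ∈ sympDual Surf13 := by
      intro l hl hv
      rw [mem_dual_iff]
      intro g hg
      exact (genV_phi (sympHom g) gensV (gens_symp g hg) _ _ hv).trans (hl g hg)
    simp only [allV, List.mem_append] at h
    rcases h with h | h | h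
    · refine ⟨hl _ gens_lX h, fun hs => ?_⟩
      have h1 := genV_phi _ gensV gens_symp_lZ _ _ h
      have h2 := genV_phi _ gensV gens_symp_lZ _ _ ((hS v).1 hs)
      rw [h1, b1, map_zero] at h2
      exact absurd h2 (by decide)
    · refine ⟨hl _ gens_lZ h, fun hs => ?_⟩
      have h1 := genV_phi _ gensV gens_symp_lX _ _ h
      have h2 := genV_phi _ gensV gens_symp_lX _ _ ((hS v).1 hs)
      rw [h1, a2, map_zero] at h2
      exact absurd h2 (by decide)
    · refine ⟨hl _ gens_lY h, fun hs => ?_⟩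
      have h1 := genV_phi _ gensV gens_symp_lX _ _ h
      have h2 := genV_phi _ gensV gens_symp_lX _ _ ((hS v).1 hs)
      rw [h1, a3, map_zero] at h2
      exact absurd h2 (by decide)

theorem ncard_eq (w : ℕ) :
    {v ∈ sympDual Surf13 | v ∉ Surf13 ∧ wt v = w}.ncard = (allV.map wt).count w := by
  have : {v ∈ sympDual Surf13 | v ∉ Surf13 ∧ wt v = w}
      = ↑(allV.filter (fun v => wt v = w)).toFinset := by
    ext v
    simp only [Set.mem_ofPred_eq, ← and_assoc, undet_iff, List.coe_toFinset, List.mem_filter,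
      decide_eq_true_eq]
  rw [this, Set.ncard_coe_finset, List.toFinset_card_of_nodup (allV_nodup.filter _),
    List.count, List.countP_map, List.countP_eq_length_filter]
  congr 1

/-! Numerical evaluation. -/

/-- Decode a 26-bit number as a Pauli vector. -/
def dec (m : ℕ) : PauliVec 13 := fun i =>
  (if m.testBit i then 1 else 0, if m.testBit (i + 13) then 1 else 0)

theorem dec_xor (m k : ℕ) : dec (m ^^^ k) = dec m + dec k := by
  funext i
  simp only [dec, Nat.testBit_xor, Pi.add_apply, Prod.mk_add_mk]
  cases m.testBit i <;> cases k.testBit i <;> cases m.testBit (i + 13) <;>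
    cases k.testBit (i + 13) <;> decide

def pop : ℕ → ℕ → ℕ
  | 0, _ => 0
  | k + 1, u => u % 2 + pop k (u / 2)

def wtN (m : ℕ) : ℕ := pop 13 (m ||| (m >>> 13))

theorem pop_eq (k : ℕ) : ∀ u, pop k u = ∑ i : Fin k, if u.testBit i then 1 else 0 := by
  induction k with
  | zero => intro u; simp [pop]
  | succ k ih =>
    intro u
    rw [pop, ih, Fin.sum_univ_succ]
    congr 1
    · simp only [Fin.val_zero, Nat.testBit_zero, decide_eq_true_eq]
      split_ifs <;> omega
    · simp [Nat.testBit_succ]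

theorem wt_dec (m : ℕ) : wt (dec m) = wtN m := by
  rw [wt, wtN, pop_eq, Finset.card_filter]
  refine Finset.sum_congr rfl fun i _ => ?_
  simp only [dec, Nat.testBit_or, Nat.testBit_shiftRight, add_comm 13]
  by_cases h1 : m.testBit i = true <;> by_cases h2 : m.testBit (i + 13) = true <;> simp [h1, h2]

def cnt : List ℕ → ℕ → ℕ
  | [], v => (2 ^ 14) ^ wtN v
  | g :: gs, v => cnt gs v + cnt gs (v ^^^ g)

theorem cnt_eq (gs : List ℕ) : ∀ m,
    (((genV (gs.map dec) (dec m)).map wt).map ((2 ^ 14) ^ ·)).sum = cnt gs m := by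
  induction gs with
  | nil => intro m; simp [genV, cnt, wt_dec]
  | cons g gs ih =>
    intro m
    rw [List.map_cons, genV, ← dec_xor, List.map_append, List.map_append, List.sum_append,
      ih, ih, cnt]

def gensN : List ℕ := [11, 22, 335872, 737280, 1212416, 360, 720, 10747904, 23592960, 38797312, 3328, 6656]

theorem gensN_eq : gensN.map dec = gensV := by
  unfold gensN gensV
  simp only [List.map_cons, List.map_nil, List.cons.injEq, and_true]
  refine ⟨?_, ?_, ?_, ?_, ?_, ?_, ?_, ?_, ?_, ?_, ?_, ?_⟩ <;> funext i <;> fin_cases i <;> rfl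

theorem lX_eq : lX = dec 4228 := by
  funext i
  fin_cases i <;> rfl
theorem lZ_eq : lZ = dec 58720256 := by
  funext i
  fin_cases i <;> rfl

theorem sum_pow_count (B : ℕ) (n : ℕ) (l : List ℕ) (h : ∀ x ∈ l, x < n) :
    (l.map (B ^ ·)).sum = Nat.ofDigits B ((List.range n).map (fun w => l.count w)) := by
  have key : ∀ f : ℕ → ℕ, Nat.ofDigits B ((List.range n).map f)
      = ∑ i ∈ Finset.range n, f i * B ^ i := by
    intro f
    clear h
    induction n with
    | zero => simp
    | succ n ih =>
      rw [List.range_succ, List.map_append, Nat.ofDigits_append, ih, Finset.sum_range_succ]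
      simp [mul_comm]
  rw [key]
  clear key
  induction l with
  | nil => simp
  | cons a l ih =>
    have ha : a < n := h a List.mem_cons_self
    rw [List.map_cons, List.sum_cons, ih fun x hx => h x (List.mem_cons_of_mem _ hx)]
    simp only [List.count_cons, add_mul, Finset.sum_add_distrib, beq_iff_eq, ite_mul, one_mul,
      zero_mul, Finset.sum_ite_eq, Finset.mem_range, ha, if_true]
    exact add_comm _ _

theorem wt_le (v : PauliVec 13) : wt v < 14 :=
  Nat.lt_succ_of_le ((Finset.card_le_univ _).trans (by simp))

theorem hist : (List.range 14).map (fun w => (allV.map wt).count w) =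
    [0, 0, 0, 6, 24, 75, 240, 648, 1440, 2538, 3216, 2634, 1224, 243] := by
  have hb : ∀ x ∈ allV.map wt, x < 14 := by
    intro x hx
    obtain ⟨v, -, rfl⟩ := List.mem_map.1 hx
    exact wt_le v
  have h1 := sum_pow_count (2 ^ 14) 14 (allV.map wt) hb
  have hlen : (allV.map wt).length < 2 ^ 14 := by
    have : ∀ (gs : List (PauliVec 13)) v, (genV gs v).length = 2 ^ gs.length := by
      intro gs
      induction gs with
      | nil => intro v; rfl
      | cons g gs ih => intro v; simp [genV, ih, pow_succ]; ring
    simp [allV, this, gensV]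
  refine Nat.ofDigits_inj_of_len_eq (b := 2 ^ 14) (by norm_num) (by simp) ?_ ?_ ?_
  · intro d hd
    obtain ⟨w, -, rfl⟩ := List.mem_map.1 hd
    exact List.count_le_length.trans_lt hlen
  · decide
  · rw [← h1, allV, lZ_eq, lX_eq, ← dec_xor, ← gensN_eq]
    simp only [List.map_append, List.sum_append, cnt_eq]
    decide +kernel

theorem hist_at (w : ℕ) (hw : w < 14) :
    {v ∈ sympDual Surf13 | v ∉ Surf13 ∧ wt v = w}.ncard =
    [0, 0, 0, 6, 24, 75, 240, 648, 1440, 2538, 3216, 2634, 1224, 243].getD w 0 := by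
  rw [ncard_eq, ← hist]
  simp [List.getD, hw]

/-- The undetectable-error weight enumerator of the `[[13,1,3]]` surface code is
`L(z) = 6z³ + 24z⁴ + 75z⁵ + 240z⁶ + 648z⁷ + 1440z⁸ + 2538z⁹ + 3216z¹⁰ + 2634z¹¹
+ 1224z¹² + 243z¹³`. -/
theorem stmt_18 :
    {v ∈ sympDual Surf13 | v ∉ Surf13 ∧ wt v = 3}.ncard = 6 ∧
    {v ∈ sympDual Surf13 | v ∉ Surf13 ∧ wt v = 4}.ncard = 24 ∧
    {v ∈ sympDual Surf13 | v ∉ Surf13 ∧ wt v = 5}.ncard = 75 ∧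
    {v ∈ sympDual Surf13 | v ∉ Surf13 ∧ wt v = 6}.ncard = 240 ∧
    {v ∈ sympDual Surf13 | v ∉ Surf13 ∧ wt v = 7}.ncard = 648 ∧
    {v ∈ sympDual Surf13 | v ∉ Surf13 ∧ wt v = 8}.ncard = 1440 ∧
    {v ∈ sympDual Surf13 | v ∉ Surf13 ∧ wt v = 9}.ncard = 2538 ∧
    {v ∈ sympDual Surf13 | v ∉ Surf13 ∧ wt v = 10}.ncard = 3216 ∧
    {v ∈ sympDual Surf13 | v ∉ Surf13 ∧ wt v = 11}.ncard = 2634 ∧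
    {v ∈ sympDual Surf13 | v ∉ Surf13 ∧ wt v = 12}.ncard = 1224 ∧
    {v ∈ sympDual Surf13 | v ∉ Surf13 ∧ wt v = 13}.ncard = 243 ∧
    ∀ w : ℕ, w < 3 ∨ w > 13 →
      {v ∈ sympDual Surf13 | v ∉ Surf13 ∧ wt v = w}.ncard = 0 := by
  refine ⟨hist_at 3 (by norm_num), hist_at 4 (by norm_num), hist_at 5 (by norm_num),
    hist_at 6 (by norm_num), hist_at 7 (by norm_num), hist_at 8 (by norm_num),
    hist_at 9 (by norm_num), hist_at 10 (by norm_num), hist_at 11 (by norm_num),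
    hist_at 12 (by norm_num), hist_at 13 (by norm_num), ?_⟩
  rintro w (hw | hw)
  · rw [hist_at w (by omega)]
    interval_cases w <;> rfl
  · rw [ncard_eq, List.count_eq_zero]
    intro h
    obtain ⟨v, -, rfl⟩ := List.mem_map.1 h
    have := wt_le v
    omega
end
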